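/- arXiv:1901.10659 — 2 statements merged into one kernel-verified Lean document; each statement's English description precedes it below -/
import Mathlib

section
/- Let 𝔽 be a field and d ≥ 1 an integer. Suppose there exist scalars {θ_i}_{i=0}^{d}, {θ*_i}_{i=0}^{d}, {a_i}_{i=0}^{d}, {b_i}_{i=0}^{d−1}, {c_i}_{i=1}^{d} in 𝔽 such that: (i) θ_i ≠ θ_j whenever i ≠ j (0 ≤ i,j ≤ d); (ii) θ*_i ≠ θ*_0 for 1 ≤ i ≤ d; (iii) there exist β, γ* ∈ 𝔽 such that γ* = θ*_{i−1} − βθ*_i + θ*_{i+1} for 1 ≤ i ≤ d−1, with θ*_{−1}, θ*_{d+1} ∈ 𝔽 defined so that this equation also holds at i = 0 and i = d; (iv) b_{i−1}c_i ≠ 0 for 1 ≤ i ≤ d; (v) c_i + a_i + b_i = θ_0 for 0 ≤ i ≤ d, where b_d = c_0 = 0; (vi) there exists a*_0 ∈ 𝔽 such that c_i(θ*_{i−1} − θ*_i) − b_i(θ*_i − θ*_{i+1}) = (θ_1 − θ_0)(θ*_i − a*_0) for 0 ≤ i ≤ d; (vii) there exists θ_{−1} ∈ 𝔽 such that the expression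 c_i(θ*_{i−1} − θ*_{i+1}) − b_{i−1}(θ*_{i−2} − θ*_i) − (θ_0 − θ_{−1})(θ*_{i−1} + θ*_i) is independent of i for 1 ≤ i ≤ d; (viii) with γ := θ_{−1} − βθ_0 + θ_1, one has θ_{i−1} − βθ_i + θ_{i+1} = γ for 1 ≤ i ≤ d−1. Then the (d+1)×(d+1) irreducible tridiagonal matrix A over 𝔽 with diagonal entries a_0,…,a_d, superdiagonal entries b_0,…,b_{d−1}, and subdiagonal entries c_1,…,c_d, together with the diagonal matrix A* = diag(θ*_0,…,θ*_d), form a Leonard pair on 𝔽^{d+1}; moreover, A is multiplicity-free with eigenvalues θ_0,…,θ_d, A* is multiplicity-free with eigenvalues θ*_0,…,θ*_d, and (A; {E_i}; A*; {E*_i}) is a Leonard system, where E_i is the primitive idempotent of A for θ_i and E*_i is the primitive idempotent of A* for θ*_i. -/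
namespace LeonardPaper

variable {F : Type*} [Field F] {V : Type*} [AddCommGroup V] [Module F V]

/-- A square matrix is irreducible tridiagonal: entries vanish off the three central
diagonals, and all subdiagonal and superdiagonal entries are nonzero. -/
def IsIrredTridiag {n : ℕ} (M : Matrix (Fin n) (Fin n) F) : Prop :=
  (∀ i j : Fin n, ((i : ℕ) + 1 < (j : ℕ) ∨ (j : ℕ) + 1 < (i : ℕ)) → M i j = 0) ∧
  (∀ i j : Fin n, ((i : ℕ) + 1 = (j : ℕ) ∨ (j : ℕ) + 1 = (i : ℕ)) → M i j ≠ 0)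

/-- Leonard pair on `V` (of dimension `d+1`). -/
def IsLeonardPair (d : ℕ) (A As : Module.End F V) : Prop :=
  (∃ bas : Module.Basis (Fin (d + 1)) F V,
      IsIrredTridiag (LinearMap.toMatrix bas bas A) ∧ (LinearMap.toMatrix bas bas As).IsDiag) ∧
  (∃ bas : Module.Basis (Fin (d + 1)) F V,
      IsIrredTridiag (LinearMap.toMatrix bas bas As) ∧ (LinearMap.toMatrix bas bas A).IsDiag)

/-- A system of mutually orthogonal (rank-one) idempotents in `End(V)`. -/
def MOISys (d : ℕ) (E : Fin (d + 1) → Module.End F V) : Prop :=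
  (∀ i j, E i * E j = if i = j then E i else 0) ∧
  ∀ i, Module.finrank F (LinearMap.range (E i)) = 1

/-- `E` is the system of primitive idempotents of a multiplicity-free `A`,
with eigenvalue ordering `θ`. -/
def IdempSysOf (d : ℕ) (A : Module.End F V) (θ : Fin (d + 1) → F)
    (E : Fin (d + 1) → Module.End F V) : Prop :=
  MOISys d E ∧ (∑ i, E i) = 1 ∧ Function.Injective θ ∧ ∀ i, A * E i = θ i • E i

/-- Leonard system. -/
def IsLeonardSystem (d : ℕ) (A : Module.End F V) (E : Fin (d + 1) → Module.End F V)
    (As : Module.End F V) (Es : Fin (d + 1) → Module.End F V) : Prop :=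
  (∃ θ, IdempSysOf d A θ E) ∧ (∃ θs, IdempSysOf d As θs Es) ∧
  (∀ i j : Fin (d + 1), ((i : ℕ) + 1 < (j : ℕ) ∨ (j : ℕ) + 1 < (i : ℕ)) → Es i * A * Es j = 0) ∧
  (∀ i j : Fin (d + 1), ((i : ℕ) + 1 = (j : ℕ) ∨ (j : ℕ) + 1 = (i : ℕ)) → Es i * A * Es j ≠ 0) ∧
  (∀ i j : Fin (d + 1), ((i : ℕ) + 1 < (j : ℕ) ∨ (j : ℕ) + 1 < (i : ℕ)) → E i * As * E j = 0) ∧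
  (∀ i j : Fin (d + 1), ((i : ℕ) + 1 = (j : ℕ) ∨ (j : ℕ) + 1 = (i : ℕ)) → E i * As * E j ≠ 0)

/-- The tridiagonal matrix with diagonal `a`, superdiagonal `b`, subdiagonal `c`. -/
def triMat (d : ℕ) (a b c : ℕ → F) : Matrix (Fin (d + 1)) (Fin (d + 1)) F :=
  Matrix.of fun i j : Fin (d + 1) =>
    if (i : ℕ) = (j : ℕ) then a i
    else if (i : ℕ) + 1 = (j : ℕ) then b i
    else if (j : ℕ) + 1 = (i : ℕ) then c i
    else 0


/-- Conditions (i)–(viii) of the second main theorem (Theorem 4.1 of the paper).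
Here `θ` is the (extended) eigenvalue sequence (indices `-1, 0, …, d`), `θs` the
(extended) dual eigenvalue sequence (indices `-1, 0, …, d+1`), `a`, `b`, `c` the
candidate intersection numbers, and `Ω` the common value in condition (vii). -/
def Thm2Conds (d : ℕ) (θ θs : ℤ → F) (a b c : ℕ → F) (β γ γs astar0 Ω : F) : Prop :=
  -- (i)
  (∀ i j : ℤ, 0 ≤ i → i ≤ d → 0 ≤ j → j ≤ d → i ≠ j → θ i ≠ θ j) ∧
  -- (ii)
  (∀ i : ℤ, 1 ≤ i → i ≤ d → θs i ≠ θs 0) ∧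
  -- (iii), extended to i = 0 and i = d via θs (-1) and θs (d+1)
  (∀ i : ℤ, 0 ≤ i → i ≤ d → γs = θs (i - 1) - β * θs i + θs (i + 1)) ∧
  -- (iv)
  (∀ i : ℕ, 1 ≤ i → i ≤ d → b (i - 1) * c i ≠ 0) ∧
  -- (v)
  (b d = 0) ∧ (c 0 = 0) ∧
  (∀ i : ℕ, i ≤ d → c i + a i + b i = θ 0) ∧
  -- (vi)
  (∀ i : ℕ, i ≤ d →
    c i * (θs ((i : ℤ) - 1) - θs i) - b i * (θs i - θs ((i : ℤ) + 1))
      = (θ 1 - θ 0) * (θs i - astar0)) ∧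
  -- (vii)
  (∀ i : ℕ, 1 ≤ i → i ≤ d →
    c i * (θs ((i : ℤ) - 1) - θs ((i : ℤ) + 1)) - b (i - 1) * (θs ((i : ℤ) - 2) - θs i)
      - (θ 0 - θ (-1)) * (θs ((i : ℤ) - 1) + θs i) = Ω) ∧
  -- (viii)
  (γ = θ (-1) - β * θ 0 + θ 1) ∧
  (∀ i : ℤ, 1 ≤ i → i ≤ (d : ℤ) - 1 → θ (i - 1) - β * θ i + θ (i + 1) = γ)

/-!
Conditions (i)–(viii) yield the first Askey–Wilson relation between `A` and `A*`, together with
the action of `A` on the all-ones vector `𝟙` and on `A* 𝟙`. The relation makes `A` triangular, with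
diagonal entries `θ_0, …, θ_d`, with respect to the vectors `𝟙, A* 𝟙, …, (A*)^d 𝟙`. These vectors
span: their span is `A`-invariant and contains the first standard basis vector, because `θ*_0`
differs from every other `θ*_i`. Hence `A` has an eigenbasis adapted to this flag, and `A*` is upper
Hessenberg in it, with ones on the subdiagonal. As `A` is irreducible tridiagonal, a nondegenerate
diagonal bilinear form makes both `A` and `A*` self-adjoint. The eigenbasis of `A` is then
orthogonal, so the Hessenberg matrix of `A*` is symmetrizable, and therefore irreducible
tridiagonal.
-/

section Krylov

variable {R M : Type*} [CommRing R] [AddCommGroup M] [Module R M]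

/-- The Krylov submodule spanned by `v, T v, …, T ^ (n - 1) v`. -/
def krylov (T : Module.End R M) (v : M) (n : ℕ) : Submodule R M :=
  Submodule.span R ((fun k => (T ^ k) v) '' Set.Iio n)

variable {T : Module.End R M} {v x : M} {m n : ℕ}

lemma krylov_zero : krylov T v 0 = ⊥ := by
  simp [krylov]

lemma krylov_mono (h : m ≤ n) : krylov T v m ≤ krylov T v n :=
  Submodule.span_mono (Set.image_mono (Set.Iio_subset_Iio h))

lemma pow_apply_mem_krylov (h : m < n) : (T ^ m) v ∈ krylov T v n :=
  Submodule.subset_span ⟨m, h, rfl⟩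

lemma apply_mem_krylov_succ (hx : x ∈ krylov T v n) : T x ∈ krylov T v (n + 1) := by
  have hle : krylov T v n ≤ (krylov T v (n + 1)).comap T := by
    refine Submodule.span_le.2 ?_
    rintro _ ⟨k, hk, rfl⟩
    have hk' : k + 1 < n + 1 := Nat.succ_lt_succ hk
    simpa [pow_succ'] using pow_apply_mem_krylov (T := T) (v := v) hk'
  exact hle hx

lemma aeval_apply_mem_krylov {p : Polynomial R} (hp : p.natDegree < n) :
    Polynomial.aeval T p v ∈ krylov T v n := by
  rw [Polynomial.aeval_eq_sum_range' hp, LinearMap.sum_apply]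
  exact sum_mem fun k hk =>
    Submodule.smul_mem _ _ (pow_apply_mem_krylov (Finset.mem_range.1 hk))

/-- `A` is triangular, with diagonal entries `θ 0, …, θ (N - 1)`, with respect to the sequence
`v, T v, …, T ^ (N - 1) v`. -/
def IsKrylovTriangular (A T : Module.End R M) (v : M) (θ : ℕ → R) (N : ℕ) : Prop :=
  ∀ n < N, A ((T ^ n) v) - θ n • (T ^ n) v ∈ krylov T v n

namespace IsKrylovTriangular

variable {A : Module.End R M} {θ : ℕ → R} {N : ℕ}

lemma apply_sub_smul_mem (h : IsKrylovTriangular A T v θ N) (hn : n < N)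
    (hx : x ∈ krylov T v (n + 1)) : A x - θ n • x ∈ krylov T v n := by
  have hle : krylov T v (n + 1) ≤ (krylov T v n).comap (A - θ n • 1) := by
    refine Submodule.span_le.2 ?_
    rintro _ ⟨k, hk, rfl⟩
    have hkn : k ≤ n := Nat.lt_succ_iff.1 hk
    rcases hkn.eq_or_lt with rfl | hlt
    · exact h k hn
    · have hk₁ : A ((T ^ k) v) - θ k • (T ^ k) v ∈ krylov T v n :=
        krylov_mono hkn (h k (hlt.trans hn))
      have hk₂ : (θ k - θ n) • (T ^ k) v ∈ krylov T v n :=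
        Submodule.smul_mem _ _ (pow_apply_mem_krylov hlt)
      have hsum := add_mem hk₁ hk₂
      rwa [sub_smul, sub_add_sub_cancel] at hsum
  exact hle hx

lemma apply_mem (h : IsKrylovTriangular A T v θ N) (hn : n ≤ N) (hx : x ∈ krylov T v n) :
    A x ∈ krylov T v n := by
  cases n with
  | zero => simp_all [krylov_zero]
  | succ n =>
    have hsub := krylov_mono n.le_succ (h.apply_sub_smul_mem hn hx)
    exact (Submodule.sub_mem_iff_left _ (Submodule.smul_mem _ _ hx)).1 hsub

end IsKrylovTriangular

end Krylov

section Basis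

variable {ι R M : Type*} [CommRing R] [AddCommGroup M] [Module R M] {A : Module.End R M}
  {θ : ι → R} {u : Module.Basis ι R M}

lemma repr_apply_of_apply_basis_eq_smul (hA : ∀ i, A (u i) = θ i • u i) (x : M) (i : ι) :
    u.repr (A x) i = θ i * u.repr x i := by
  have hcoord : u.coord i ∘ₗ A = θ i • u.coord i := by
    refine u.ext fun j => ?_
    rcases eq_or_ne j i with rfl | hji
    · simp [hA]
    · simp [hA, hji]
  exact LinearMap.congr_fun hcoord x

lemma isDiag_toMatrix_of_apply_basis_eq_smul [Fintype ι] [DecidableEq ι]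
    (hA : ∀ i, A (u i) = θ i • u i) : (LinearMap.toMatrix u u A).IsDiag := by
  intro i j hij
  simp [LinearMap.toMatrix_apply, hA, hij.symm]

lemma isOrthoᵢ_of_isSelfAdjoint [IsDomain R] {B : LinearMap.BilinForm R M}
    (hB : LinearMap.IsSelfAdjoint B A) (hθ : Function.Injective θ)
    (hA : ∀ i, A (u i) = θ i • u i) : B.IsOrthoᵢ u := by
  intro i j hij
  have hadj : θ i * B (u i) (u j) = θ j * B (u i) (u j) := by
    simpa [hA] using hB (u i) (u j)
  exact (mul_eq_mul_right_iff.1 hadj).resolve_left (hθ.ne hij)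

lemma apply_mul_toMatrix_comm_of_isSelfAdjoint [Fintype ι] [DecidableEq ι]
    {B : LinearMap.BilinForm R M} {T : Module.End R M} (hu : B.IsOrthoᵢ u)
    (hT : LinearMap.IsSelfAdjoint B T) (i j : ι) :
    B (u i) (u i) * LinearMap.toMatrix u u T i j =
      B (u j) (u j) * LinearMap.toMatrix u u T j i := by
  have hright (x : M) (k : ι) : B (u k) x = B (u k) (u k) * u.repr x k := by
    conv_lhs => rw [← u.sum_repr x, map_sum]
    rw [Finset.sum_eq_single k (fun l _ hl => by rw [map_smul, hu hl.symm, smul_zero]) (by simp),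
      map_smul, smul_eq_mul, mul_comm]
  have hleft (x : M) (k : ι) : B x (u k) = B (u k) (u k) * u.repr x k := by
    conv_lhs => rw [← u.sum_repr x, map_sum, LinearMap.sum_apply]
    rw [Finset.sum_eq_single k
      (fun l _ hl => by rw [map_smul, LinearMap.smul_apply, hu hl, smul_zero]) (by simp),
      map_smul, LinearMap.smul_apply, smul_eq_mul, mul_comm]
  simp only [LinearMap.toMatrix_apply]
  rw [← hright, ← hleft, hT]

lemma isSelfAdjoint_toLinearMap₂'_diagonal [Fintype ι] [DecidableEq ι] {k : ι → R}
    {N : Matrix ι ι R} (hN : ∀ i j, k i * N i j = k j * N j i) :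
    LinearMap.IsSelfAdjoint (Matrix.toLinearMap₂' R (Matrix.diagonal k)) N.toLin' := by
  refine (isAdjointPair_toLinearMap₂' ..).2 ?_
  ext i j
  simp [hN, mul_comm]

end Basis

section Triangular

variable {A T : Module.End F V} {v x : V} {θ : ℕ → F} {n N : ℕ}

namespace IsKrylovTriangular

lemma exists_apply_sub_smul_eq (h : IsKrylovTriangular A T v θ N) {μ : F} (hn : n ≤ N)
    (hμ : ∀ m < n, θ m ≠ μ) (hx : x ∈ krylov T v n) :
    ∃ y ∈ krylov T v n, A y - μ • y = x := by
  induction n generalizing x with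
  | zero => exact ⟨0, zero_mem _, by simp_all [krylov_zero]⟩
  | succ n ih =>
    have hne : θ n - μ ≠ 0 := sub_ne_zero.2 (hμ n n.lt_succ_self)
    obtain ⟨y, hy, hyx⟩ := ih (Nat.le_of_succ_le hn) (fun m hm => hμ m (hm.trans n.lt_succ_self))
      (h.apply_sub_smul_mem hn hx)
    -- `(A - μ) x = (A - θ n) x + (θ n - μ) x`, and the first summand is `(A - μ) y`.
    refine ⟨(θ n - μ)⁻¹ • (x - y),
      Submodule.smul_mem _ _ (sub_mem hx (krylov_mono n.le_succ hy)), ?_⟩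
    rw [map_smul, smul_comm μ, ← smul_sub, inv_smul_eq_iff₀ hne, map_sub]
    linear_combination (norm := module) -hyx

lemma exists_eigenvector (h : IsKrylovTriangular A T v θ N) (hn : n < N)
    (hθ : ∀ m < n, θ m ≠ θ n) : ∃ u, A u = θ n • u ∧ u - (T ^ n) v ∈ krylov T v n := by
  obtain ⟨y, hy, hyn⟩ := h.exists_apply_sub_smul_eq hn.le hθ (h n hn)
  refine ⟨(T ^ n) v - y, ?_, by simpa using hy⟩
  rw [map_sub, smul_sub, sub_eq_sub_iff_sub_eq_sub, hyn]

lemma exists_eigenbasis [FiniteDimensional F V] (h : IsKrylovTriangular A T v θ N)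
    (hN : Module.finrank F V = N) (htop : krylov T v N = ⊤) (hθ : Set.InjOn θ (Set.Iio N)) :
    ∃ u : Module.Basis (Fin N) F V,
      ∀ i : Fin N, A (u i) = θ i • u i ∧ u i - (T ^ (i : ℕ)) v ∈ krylov T v i := by
  have hex (i : Fin N) : ∃ u, A u = θ i • u ∧ u - (T ^ (i : ℕ)) v ∈ krylov T v i :=
    h.exists_eigenvector i.2 fun m hm hmi => hm.ne (hθ (hm.trans i.2) i.2 hmi)
  choose u hAu hu using hex
  have hli : LinearIndependent F fun k : Fin N => (T ^ (k : ℕ)) v := by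
    refine linearIndependent_of_top_le_span_of_card_eq_finrank ?_ (by simp [hN])
    rw [← htop]
    refine Submodule.span_mono ?_
    rintro _ ⟨k, hk, rfl⟩
    exact ⟨⟨k, hk⟩, rfl⟩
  have hpow (i : Fin N) : (T ^ (i : ℕ)) v ∉ krylov T v i := by
    have himage : (fun k => (T ^ k) v) '' Set.Iio (i : ℕ) =
        (fun k : Fin N => (T ^ (k : ℕ)) v) '' Set.Iio i := by
      ext x
      exact ⟨fun ⟨k, hk, hx⟩ => ⟨⟨k, hk.trans i.2⟩, hk, hx⟩, fun ⟨k, hk, hx⟩ => ⟨k, hk, hx⟩⟩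
    rw [krylov, himage]
    exact hli.notMem_span_image (lt_irrefl i)
  have hne (i : Fin N) : u i ≠ 0 := fun h0 => hpow i (by simpa [h0] using hu i)
  have huli : LinearIndependent F u :=
    Module.End.eigenvectors_linearIndependent' A (fun i : Fin N => θ i)
      (fun i j hij => Fin.ext (hθ i.2 j.2 hij)) u
      fun i => Module.End.hasEigenvector_iff.2 ⟨Module.End.mem_eigenspace_iff.2 (hAu i), hne i⟩
  refine ⟨basisOfLinearIndependentOfCardEqFinrank' u huli (by simp [hN]), fun i => ?_⟩
  simpa using ⟨hAu i, hu i⟩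

-- Write `x = (A - θ i) y`: as `A` is diagonal in the basis `u`, the `i`-th coordinate vanishes.
lemma repr_eq_zero (h : IsKrylovTriangular A T v θ N) (hθ : Set.InjOn θ (Set.Iio N))
    {u : Module.Basis (Fin N) F V} (hu : ∀ i : Fin N, A (u i) = θ i • u i) {i : Fin N}
    (hx : x ∈ krylov T v i) : u.repr x i = 0 := by
  obtain ⟨y, -, rfl⟩ := h.exists_apply_sub_smul_eq i.2.le
    (fun m hm hmi => hm.ne (hθ (hm.trans i.2) i.2 hmi)) hx
  simp [repr_apply_of_apply_basis_eq_smul hu]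

lemma toMatrix_eq_zero (h : IsKrylovTriangular A T v θ N) (hθ : Set.InjOn θ (Set.Iio N))
    {u : Module.Basis (Fin N) F V} (hA : ∀ i : Fin N, A (u i) = θ i • u i)
    (hu : ∀ i : Fin N, u i - (T ^ (i : ℕ)) v ∈ krylov T v i) {i j : Fin N}
    (hij : (j : ℕ) + 1 < i) : LinearMap.toMatrix u u T i j = 0 := by
  have huj : u j ∈ krylov T v (j + 1) := by
    simpa using add_mem (krylov_mono (Nat.le_succ j) (hu j))
      (pow_apply_mem_krylov (Nat.lt_succ_self j))
  rw [LinearMap.toMatrix_apply]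
  exact h.repr_eq_zero hθ hA (krylov_mono hij (apply_mem_krylov_succ huj))

lemma toMatrix_eq_one (h : IsKrylovTriangular A T v θ N) (hθ : Set.InjOn θ (Set.Iio N))
    {u : Module.Basis (Fin N) F V} (hA : ∀ i : Fin N, A (u i) = θ i • u i)
    (hu : ∀ i : Fin N, u i - (T ^ (i : ℕ)) v ∈ krylov T v i) {i j : Fin N}
    (hij : (j : ℕ) + 1 = i) : LinearMap.toMatrix u u T i j = 1 := by
  have hdiff : T (u j) - u i ∈ krylov T v i := by
    have hTu := apply_mem_krylov_succ (hu j)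
    rw [hij, map_sub, ← Module.End.mul_apply, ← pow_succ', hij] at hTu
    simpa using sub_mem hTu (hu i)
  have hrepr := h.repr_eq_zero hθ hA hdiff
  rw [map_sub, Finsupp.sub_apply, sub_eq_zero] at hrepr
  simp [LinearMap.toMatrix_apply, hrepr]

end IsKrylovTriangular

end Triangular

section Tridiagonal

lemma isIrredTridiag_of_symmetrizable {n : ℕ} {M : Matrix (Fin n) (Fin n) F} {g : Fin n → F}
    (hg : ∀ i, g i ≠ 0) (hsymm : ∀ i j, g i * M i j = g j * M j i)
    (hzero : ∀ i j : Fin n, (j : ℕ) + 1 < i → M i j = 0)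
    (hne : ∀ i j : Fin n, (j : ℕ) + 1 = i → M i j ≠ 0) : IsIrredTridiag M := by
  have htranspose (i j : Fin n) : M i j = 0 ↔ M j i = 0 := by
    rw [← mul_right_inj' (hg i), hsymm, mul_zero, mul_eq_zero, or_iff_right (hg j)]
  refine ⟨fun i j hij => hij.elim (fun h => ?_) (hzero i j),
    fun i j hij => hij.elim (fun h => ?_) (hne i j)⟩
  · exact (htranspose i j).2 (hzero j i h)
  · exact (htranspose i j).not.2 (hne j i h)

namespace IsIrredTridiag

variable {d : ℕ} {M : Matrix (Fin (d + 1)) (Fin (d + 1)) F}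

lemma exists_symmetrizer (hM : IsIrredTridiag M) :
    ∃ k : Fin (d + 1) → F, (∀ i, k i ≠ 0) ∧ ∀ i j, k i * M i j = k j * M j i := by
  have hsuper (i : Fin d) : M i.castSucc i.succ ≠ 0 := hM.2 _ _ (Or.inl (by simp))
  have hsub (i : Fin d) : M i.succ i.castSucc ≠ 0 := hM.2 _ _ (Or.inr (by simp))
  let k : Fin (d + 1) → F :=
    Fin.induction 1 fun i ki => ki * M i.castSucc i.succ / M i.succ i.castSucc
  have hk (i : Fin d) : k i.succ = k i.castSucc * M i.castSucc i.succ / M i.succ i.castSucc :=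
    Fin.induction_succ ..
  have hstep (i j : Fin (d + 1)) (hij : (i : ℕ) + 1 = j) : k i * M i j = k j * M j i := by
    have hj : j ≠ 0 := by rintro rfl; simp at hij
    obtain ⟨l, rfl⟩ := Fin.exists_succ_eq.2 hj
    obtain rfl : i = l.castSucc := Fin.ext (by simpa using hij)
    rw [hk, div_mul_cancel₀ _ (hsub l)]
  refine ⟨k, fun i => ?_, fun i j => ?_⟩
  · induction i using Fin.induction with
    | zero => exact one_ne_zero
    | succ i ih => rw [hk]; exact div_ne_zero (mul_ne_zero ih (hsuper i)) (hsub i)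
  · rcases lt_trichotomy (i : ℕ) j with hij | hij | hij
    · rcases (Nat.succ_le_of_lt hij).eq_or_lt with h | h
      · exact hstep i j h
      · rw [hM.1 i j (Or.inl h), hM.1 j i (Or.inr h), mul_zero, mul_zero]
    · rw [Fin.ext hij]
    · rcases (Nat.succ_le_of_lt hij).eq_or_lt with h | h
      · exact (hstep j i h).symm
      · rw [hM.1 i j (Or.inr h), hM.1 j i (Or.inl h), mul_zero, mul_zero]

lemma eq_top_of_single_zero_mem (hM : IsIrredTridiag M) {W : Submodule F (Fin (d + 1) → F)}
    (hW : ∀ x ∈ W, M.toLin' x ∈ W) (h0 : Pi.single 0 1 ∈ W) : W = ⊤ := by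
  have hsingle (i : Fin (d + 1)) : ∀ j ≤ i, Pi.single j 1 ∈ W := by
    induction i using Fin.induction with
    | zero => intro j hj; rwa [Fin.le_zero_iff.1 hj]
    | succ i ih =>
      have hcol : M.toLin' (Pi.single i.castSucc 1) =
          ∑ j, M j i.castSucc • (Pi.single j 1 : Fin (d + 1) → F) := by
        ext l
        simp [Finset.sum_apply, Pi.single_apply]
      have hrest : ∑ j ∈ Finset.univ.erase i.succ,
          M j i.castSucc • (Pi.single j 1 : Fin (d + 1) → F) ∈ W := by
        refine sum_mem fun j hj => ?_
        rcases le_or_gt j i.castSucc with hji | hji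
        · exact W.smul_mem _ (ih j hji)
        · have hne : (j : ℕ) ≠ i.succ := Fin.val_ne_of_ne (Finset.ne_of_mem_erase hj)
          have hfar : (i.castSucc : ℕ) + 1 < j := by
            rw [Fin.val_succ] at hne
            exact lt_of_le_of_ne (Nat.succ_le_of_lt hji) hne.symm
          rw [hM.1 j i.castSucc (Or.inr hfar), zero_smul]
          exact W.zero_mem
      have hsucc := hW _ (ih _ le_rfl)
      rw [hcol, ← Finset.add_sum_erase _ _ (Finset.mem_univ i.succ),
        Submodule.add_mem_iff_left _ hrest,
        Submodule.smul_mem_iff _ (hM.2 _ _ (Or.inr (by simp)))] at hsucc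
      intro j hj
      rcases hj.eq_or_lt with rfl | hlt
      · exact hsucc
      · exact ih j (Fin.le_castSucc_iff.2 hlt)
  refine Submodule.eq_top_iff'.2 fun x => ?_
  rw [pi_eq_sum_univ' x]
  exact sum_mem fun j _ => W.smul_mem _ (hsingle j j le_rfl)

end IsIrredTridiag

lemma IsKrylovTriangular.exists_eigenbasis_isIrredTridiag [FiniteDimensional F V]
    {A T : Module.End F V} {v : V} {θ : ℕ → F} {N : ℕ} (h : IsKrylovTriangular A T v θ N)
    (hN : Module.finrank F V = N) (htop : krylov T v N = ⊤) (hθ : Set.InjOn θ (Set.Iio N))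
    {B : LinearMap.BilinForm F V} (hB : B.SeparatingLeft) (hA : LinearMap.IsSelfAdjoint B A)
    (hT : LinearMap.IsSelfAdjoint B T) :
    ∃ u : Module.Basis (Fin N) F V,
      (∀ i : Fin N, A (u i) = θ i • u i) ∧ IsIrredTridiag (LinearMap.toMatrix u u T) := by
  obtain ⟨u, hu⟩ := h.exists_eigenbasis hN htop hθ
  have hAu (i : Fin N) : A (u i) = θ i • u i := (hu i).1
  have hortho : B.IsOrthoᵢ u := isOrthoᵢ_of_isSelfAdjoint (θ := fun i : Fin N => θ i) hA
    (fun i j hij => Fin.ext (hθ i.2 j.2 hij)) hAu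
  refine ⟨u, hAu, isIrredTridiag_of_symmetrizable
    (hortho.not_isOrtho_basis_self_of_separatingLeft hB)
    (apply_mul_toMatrix_comm_of_isSelfAdjoint hortho hT)
    (fun i j => h.toMatrix_eq_zero hθ hAu fun i => (hu i).2) fun i j hij => ?_⟩
  rw [h.toMatrix_eq_one hθ hAu (fun i => (hu i).2) hij]
  exact one_ne_zero

end Tridiagonal

section Diagonal

variable {d n : ℕ} {t : Fin (d + 1) → F}

lemma aeval_toLin'_diagonal {ι R : Type*} [Fintype ι] [DecidableEq ι] [CommRing R] (s : ι → R)
    (p : Polynomial R) :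
    Polynomial.aeval (Matrix.diagonal s).toLin' p =
      (Matrix.diagonal fun i => p.eval (s i)).toLin' := by
  have h := Polynomial.aeval_algHom_apply
    (Matrix.toLinAlgEquiv'.toAlgHom.comp (Matrix.diagonalAlgHom R)) s p
  rw [Polynomial.aeval_pi_apply] at h
  exact h

lemma single_zero_mem_krylov (ht : ∀ i ≠ 0, t i ≠ t 0) :
    Pi.single 0 1 ∈ krylov (Matrix.diagonal t).toLin' 1 (d + 1) := by
  let p : Polynomial F := Lagrange.nodal (Finset.univ.erase 0) t
  have hp0 : p.eval (t 0) ≠ 0 :=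
    Lagrange.eval_nodal_not_at_node fun i hi => (ht i (Finset.ne_of_mem_erase hi)).symm
  have hsingle : Polynomial.aeval (Matrix.diagonal t).toLin' p 1 =
      p.eval (t 0) • (Pi.single 0 1 : Fin (d + 1) → F) := by
    ext i
    rw [aeval_toLin'_diagonal, Matrix.toLin'_apply, Matrix.mulVec_diagonal]
    rcases eq_or_ne i 0 with rfl | hi
    · simp
    · simp [p, hi, Lagrange.eval_nodal_at_node (Finset.mem_erase.2 ⟨hi, Finset.mem_univ i⟩)]
  have hdeg : p.natDegree < d + 1 := by simp [p, Lagrange.natDegree_nodal]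
  have hmem := aeval_apply_mem_krylov (T := (Matrix.diagonal t).toLin') (v := 1) hdeg
  rwa [hsingle, Submodule.smul_mem_iff _ hp0] at hmem

lemma injective_of_krylov_eq_top (h : krylov (Matrix.diagonal t).toLin' 1 n = ⊤) :
    Function.Injective t := by
  intro i j hij
  have hle : krylov (Matrix.diagonal t).toLin' 1 n ≤
      LinearMap.eqLocus (LinearMap.proj (φ := fun _ => F) i) (LinearMap.proj j) := by
    refine Submodule.span_le.2 ?_
    rintro _ ⟨k, -, rfl⟩
    simp [← Matrix.toLin'_pow, Matrix.diagonal_pow, Matrix.mulVec_diagonal, hij]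
  have hmem : (Pi.single i 1 : Fin (d + 1) → F) ∈ krylov (Matrix.diagonal t).toLin' 1 n :=
    h ▸ Submodule.mem_top
  by_contra hne
  simpa [Ne.symm hne] using hle hmem

end Diagonal

section AskeyWilson

variable {R S : Type*} [CommRing R] [Ring S] [Algebra R S]

/-- The first Askey–Wilson relation between `A` and `T = A*`:
`T² A - β T A T + A T² - γ* (T A + A T) - ρ A = γ T² + ω T + η`. -/
def AskeyWilsonRel (A T : S) (β γs ρ γ ω η : R) : Prop :=
  T ^ 2 * A - β • (T * A * T) + A * T ^ 2 - γs • (T * A + A * T) - ρ • A =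
    γ • T ^ 2 + ω • T + algebraMap R S η

lemma AskeyWilsonRel.map {S' : Type*} [Ring S'] [Algebra R S'] (f : S →ₐ[R] S') {A T : S}
    {β γs ρ γ ω η : R} (h : AskeyWilsonRel A T β γs ρ γ ω η) :
    AskeyWilsonRel (f A) (f T) β γs ρ γ ω η := by
  simpa [AskeyWilsonRel] using congrArg f h

lemma AskeyWilsonRel.toLin' {n : Type*} [Fintype n] [DecidableEq n] {A T : Matrix n n R}
    {β γs ρ γ ω η : R} (h : AskeyWilsonRel A T β γs ρ γ ω η) :
    AskeyWilsonRel (S := Module.End R (n → R)) A.toLin' T.toLin' β γs ρ γ ω η :=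
  h.map (S' := Module.End R (n → R)) Matrix.toLinAlgEquiv'.toAlgHom

lemma askeyWilsonRel_diagonal_iff {n : Type*} [Fintype n] [DecidableEq n] {M : Matrix n n R}
    {t : n → R} {β γs ρ γ ω η : R} :
    AskeyWilsonRel M (Matrix.diagonal t) β γs ρ γ ω η ↔ ∀ i j,
      M i j * (t i ^ 2 - β * t i * t j + t j ^ 2 - γs * (t i + t j) - ρ) =
        if i = j then γ * t i ^ 2 + ω * t i + η else 0 := by
  rw [AskeyWilsonRel, ← Matrix.ext_iff]
  refine forall₂_congr fun i j => ?_
  have hleft : (Matrix.diagonal t ^ 2 * M - β • (Matrix.diagonal t * M * Matrix.diagonal t) +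
      M * Matrix.diagonal t ^ 2 - γs • (Matrix.diagonal t * M + M * Matrix.diagonal t) -
      ρ • M) i j = M i j * (t i ^ 2 - β * t i * t j + t j ^ 2 - γs * (t i + t j) - ρ) := by
    simp only [Matrix.diagonal_pow, smul_add, Matrix.sub_apply, Matrix.add_apply,
      Matrix.diagonal_mul, Pi.pow_apply, Matrix.smul_apply, Matrix.mul_diagonal, smul_eq_mul]
    ring
  rw [hleft]
  simp only [Matrix.diagonal_pow, Matrix.add_apply, Matrix.smul_apply, Matrix.diagonal_apply,
    Matrix.algebraMap_matrix_apply]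
  split_ifs <;> simp

lemma AskeyWilsonRel.apply_sub_smul_eq {M : Type*} [AddCommGroup M] [Module R M]
    {A T : Module.End R M} {β γs ρ γ ω η : R} (h : AskeyWilsonRel A T β γs ρ γ ω η)
    {θ₀ θ₁ θ₂ : R} (hθ : θ₀ - β * θ₁ + θ₂ = γ) (w : M) :
    A (T (T w)) - θ₂ • T (T w) =
      β • T (A (T w) - θ₁ • T w) - T (T (A w - θ₀ • w)) + γs • (T (A w) + A (T w)) +
        ρ • A w + ω • T w + η • w := by
  have hrel : T (T (A w)) - β • T (A (T w)) + A (T (T w)) - γs • (T (A w) + A (T w)) - ρ • A w =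
      γ • T (T w) + ω • T w + η • w := by
    simpa [AskeyWilsonRel, pow_two] using LinearMap.congr_fun h w
  simp only [map_sub, map_smul]
  rw [← hθ] at hrel
  linear_combination (norm := module) hrel

lemma AskeyWilsonRel.isKrylovTriangular {M : Type*} [AddCommGroup M] [Module R M]
    {A T : Module.End R M} {β γs ρ γ ω η : R} (h : AskeyWilsonRel A T β γs ρ γ ω η) {v : M}
    {θ : ℕ → R} {N : ℕ} (hθ : ∀ n, n + 2 < N → θ n - β * θ (n + 1) + θ (n + 2) = γ)
    (h0 : A v = θ 0 • v) (h1 : A (T v) - θ 1 • T v ∈ krylov T v 1) :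
    IsKrylovTriangular A T v θ N := by
  intro n
  induction n using Nat.twoStepInduction with
  | zero => simp [h0]
  | one => simpa using fun _ => h1
  | more n ih₀ ih₁ =>
    intro hn
    have hA₀ := ih₀ (by omega)
    have hA₁ := ih₁ (by omega)
    rw [pow_succ', Module.End.mul_apply] at hA₁
    set w := (T ^ n) v
    have hw_mem : w ∈ krylov T v (n + 1) := pow_apply_mem_krylov n.lt_succ_self
    have hTw_mem : T w ∈ krylov T v (n + 2) := apply_mem_krylov_succ hw_mem
    have hAw_mem : A w ∈ krylov T v (n + 1) := by
      simpa using add_mem (krylov_mono n.le_succ hA₀) (Submodule.smul_mem _ (θ n) hw_mem)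
    have hATw_mem : A (T w) ∈ krylov T v (n + 2) := by
      simpa using add_mem (krylov_mono (n + 1).le_succ hA₁)
        (Submodule.smul_mem _ (θ (n + 1)) hTw_mem)
    have hpow : (T ^ (n + 2)) v = T (T w) := by
      rw [pow_succ', pow_succ', Module.End.mul_apply, Module.End.mul_apply]
    rw [hpow, h.apply_sub_smul_eq (hθ n hn)]
    have hle : krylov T v (n + 1) ≤ krylov T v (n + 2) := krylov_mono (n + 1).le_succ
    exact add_mem (add_mem (add_mem (add_mem (sub_mem
      (Submodule.smul_mem _ _ (apply_mem_krylov_succ hA₁))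
      (apply_mem_krylov_succ (apply_mem_krylov_succ hA₀)))
      (Submodule.smul_mem _ _ (add_mem (apply_mem_krylov_succ hAw_mem) hATw_mem)))
      (Submodule.smul_mem _ _ (hle hAw_mem))) (Submodule.smul_mem _ _ hTw_mem))
      (Submodule.smul_mem _ _ (hle hw_mem))

end AskeyWilson

section Thm2Conds

lemma quadraticInvariant_eq {R : Type*} [CommRing R] {d : ℕ} {s : ℤ → R} {β γ : R}
    (h : ∀ i : ℤ, 0 ≤ i → i ≤ d → γ = s (i - 1) - β * s i + s (i + 1)) {i : ℕ} (hi : i ≤ d + 1) :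
    s (i - 1) ^ 2 - β * s (i - 1) * s i + s i ^ 2 - γ * (s (i - 1) + s i) =
      s (-1) ^ 2 - β * s (-1) * s 0 + s 0 ^ 2 - γ * (s (-1) + s 0) := by
  induction i with
  | zero => simp
  | succ i ih =>
    rw [← ih (by omega)]
    have hrec := h i (by omega) (by omega)
    push_cast
    rw [add_sub_cancel_right]
    linear_combination (s (i - 1) - s (i + 1)) * hrec

lemma triMat_toLin'_apply {d : ℕ} {a b c : ℕ → F} (hb : b d = 0) (hc : c 0 = 0) (g : ℤ → F)
    (i : Fin (d + 1)) :
    (triMat d a b c).toLin' (fun j => g (j : ℕ)) i =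
      c i * g ((i : ℕ) - 1) + a i * g (i : ℕ) + b i * g ((i : ℕ) + 1) := by
  obtain ⟨i, hi⟩ := i
  have hentry (j : ℕ) :
      (if i = j then a i else if i + 1 = j then b i else if j + 1 = i then c i else 0) * g j =
        (if j + 1 = i then c i * g (i - 1) else 0) + (if i = j then a i * g i else 0) +
          (if i + 1 = j then b i * g (i + 1) else 0) := by
    split_ifs <;> subst_vars <;> first | omega | simp
  have hsub : ∑ j ∈ Finset.range (d + 1), (if j + 1 = i then c i * g (i - 1) else 0) =
      c i * g (i - 1) := by
    cases i with
    | zero => simp [hc]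
    | succ i => simp [Nat.lt_of_succ_lt hi]
  have hdiag : ∑ j ∈ Finset.range (d + 1), (if i = j then a i * g i else 0) = a i * g i := by
    simp [hi]
  have hsuper : ∑ j ∈ Finset.range (d + 1), (if i + 1 = j then b i * g (i + 1) else 0) =
      b i * g (i + 1) := by
    rcases (Nat.lt_succ_iff.1 hi).eq_or_lt with rfl | hlt
    · simp [hb]
    · simp [hlt]
  simp only [Matrix.toLin'_apply, Matrix.mulVec, dotProduct, triMat, Matrix.of_apply]
  rw [Fin.sum_univ_eq_sum_range (fun j : ℕ => (if i = j then a i else if i + 1 = j then b i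
    else if j + 1 = i then c i else 0) * g j) (d + 1), Finset.sum_congr rfl fun j _ => hentry j,
    Finset.sum_add_distrib, Finset.sum_add_distrib, hsub, hdiag, hsuper]

namespace Thm2Conds

variable {d : ℕ} {θ θs : ℤ → F} {a b c : ℕ → F} {β γ γs astar0 Ω : F}

lemma injOn_eigenvalue (h : Thm2Conds d θ θs a b c β γ γs astar0 Ω) :
    Set.InjOn (fun n : ℕ => θ n) (Set.Iio (d + 1)) := by
  intro i hi j hj hij
  by_contra hne
  rw [Set.mem_Iio] at hi hj
  exact h.1 i j (by omega) (by omega) (by omega) (by omega) (by omega) hij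

lemma isIrredTridiag_triMat (h : Thm2Conds d θ θs a b c β γ γs astar0 Ω) :
    IsIrredTridiag (triMat d a b c) := by
  obtain ⟨-, -, -, hbc, -⟩ := h
  refine ⟨fun i j hij => ?_, fun i j hij => ?_⟩
  · rw [triMat, Matrix.of_apply, if_neg (by omega), if_neg (by omega), if_neg (by omega)]
  · rw [triMat, Matrix.of_apply, if_neg (by omega)]
    rcases hij with hij | hij
    · have hbcj := hbc j (by omega) (by omega)
      rw [← hij] at hbcj
      rw [if_pos hij]
      exact left_ne_zero_of_mul hbcj
    · rw [if_neg (by omega), if_pos hij]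
      exact right_ne_zero_of_mul (hbc i (by omega) (by omega))

-- Condition (vii) times `θ*_{i-1} - θ*_i`, minus multiples of (vi) at `i - 1` and `i`, telescopes.
lemma exists_add_mul_sub_mul_sub_eq (h : Thm2Conds d θ θs a b c β γ γs astar0 Ω) :
    ∃ μ : F, ∀ i : ℕ, i ≤ d → (c i + b i) * ((θs (i - 1) - θs i) * (θs i - θs (i + 1))) =
      (θ (-1) + θ 1 - 2 * θ 0) * θs i ^ 2 - (Ω + 2 * (θ 1 - θ 0) * astar0) * θs i + μ := by
  obtain ⟨-, -, -, -, -, -, -, hfirst, hΩ, -⟩ := h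
  refine ⟨(c 0 + b 0) * ((θs (-1) - θs 0) * (θs 0 - θs 1)) -
    (θ (-1) + θ 1 - 2 * θ 0) * θs 0 ^ 2 + (Ω + 2 * (θ 1 - θ 0) * astar0) * θs 0, fun i => ?_⟩
  induction i with
  | zero => simp
  | succ i ih =>
    intro hi
    have hfirst₀ := hfirst i (by omega)
    have hfirst₁ := hfirst (i + 1) hi
    have hΩ₁ := hΩ (i + 1) (by omega) hi
    have hpred : (i : ℤ) + 1 - 2 = i - 1 := by ring
    push_cast at hfirst₁ hΩ₁ ⊢
    simp only [add_sub_cancel_right, hpred] at hfirst₁ hΩ₁ ⊢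
    linear_combination ih (by omega) + (θs i - θs (i + 1)) * (hΩ₁ - hfirst₁ - hfirst₀)

lemma exists_diag_mul_eq (h : Thm2Conds d θ θs a b c β γ γs astar0 Ω) {ρ : F}
    (hρ : ∀ i : ℕ, i ≤ d + 1 → θs (i - 1) ^ 2 - β * θs (i - 1) * θs i + θs i ^ 2 -
      γs * (θs (i - 1) + θs i) = ρ) :
    ∃ ω η : F, ∀ i : ℕ, i ≤ d →
      a i * ((2 - β) * θs i ^ 2 - 2 * γs * θs i - ρ) = γ * θs i ^ 2 + ω * θs i + η := by
  obtain ⟨μ, hμ⟩ := h.exists_add_mul_sub_mul_sub_eq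
  obtain ⟨-, -, hrec, -, -, -, hsum, -, -, hγ, -⟩ := h
  refine ⟨-(Ω + 2 * (θ 1 - θ 0) * astar0) - 2 * γs * θ 0, μ - ρ * θ 0, fun i hi => ?_⟩
  have hfactor : (θs (i - 1) - θs i) * (θs i - θs (i + 1)) =
      -((2 - β) * θs i ^ 2 - 2 * γs * θs i - ρ) := by
    linear_combination hρ i (by omega) + (θs (i - 1) - θs i) * hrec i (by omega) (by omega)
  have hμi := hμ i hi
  rw [hfactor] at hμi
  rw [hγ]
  linear_combination hμi + ((2 - β) * θs i ^ 2 - 2 * γs * θs i - ρ) * hsum i hi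

lemma exists_askeyWilsonRel (h : Thm2Conds d θ θs a b c β γ γs astar0 Ω) :
    ∃ ρ ω η : F, AskeyWilsonRel (triMat d a b c)
      (Matrix.diagonal fun i : Fin (d + 1) => θs ((i : ℕ) : ℤ)) β γs ρ γ ω η := by
  have hrec := h.2.2.1
  obtain ⟨ρ, hρ⟩ : ∃ ρ, ∀ i : ℕ, i ≤ d + 1 → θs (i - 1) ^ 2 - β * θs (i - 1) * θs i + θs i ^ 2 -
    γs * (θs (i - 1) + θs i) = ρ := ⟨_, fun i => quadraticInvariant_eq hrec⟩
  obtain ⟨ω, η, hdiag⟩ := h.exists_diag_mul_eq hρ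
  have hadj {i j : Fin (d + 1)} (hij : (i : ℕ) + 1 = j) :
      θs i ^ 2 - β * θs i * θs j + θs j ^ 2 - γs * (θs i + θs j) - ρ = 0 := by
    have hρj := hρ j (by omega)
    have hpred : ((j : ℕ) : ℤ) - 1 = (i : ℕ) := by omega
    rw [hpred] at hρj
    exact sub_eq_zero.2 hρj
  refine ⟨ρ, ω, η, askeyWilsonRel_diagonal_iff.2 fun i j => ?_⟩
  rcases lt_trichotomy (i : ℕ) j with hij | hij | hij
  · rw [if_neg (Fin.ne_of_lt hij)]
    rcases (Nat.succ_le_of_lt hij).eq_or_lt with hadjacent | hfar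
    · rw [hadj hadjacent, mul_zero]
    · rw [h.isIrredTridiag_triMat.1 i j (Or.inl hfar), zero_mul]
  · obtain rfl := Fin.ext hij
    rw [if_pos rfl, triMat, Matrix.of_apply, if_pos rfl]
    linear_combination hdiag i (by omega)
  · rw [if_neg (Fin.ne_of_gt hij)]
    rcases (Nat.succ_le_of_lt hij).eq_or_lt with hadjacent | hfar
    · linear_combination triMat d a b c i j * hadj hadjacent
    · rw [h.isIrredTridiag_triMat.1 i j (Or.inr hfar), zero_mul]

lemma triMat_toLin'_one (h : Thm2Conds d θ θs a b c β γ γs astar0 Ω) :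
    (triMat d a b c).toLin' 1 = θ 0 • 1 := by
  obtain ⟨-, -, -, -, hb, hc, hsum, -⟩ := h
  ext i
  refine (triMat_toLin'_apply hb hc (fun _ => 1) i).trans ?_
  simpa using hsum i (by omega)

lemma triMat_toLin'_dualEigenvalue (h : Thm2Conds d θ θs a b c β γ γs astar0 Ω) :
    (triMat d a b c).toLin' (fun i => θs (i : ℕ)) =
      θ 1 • (fun i : Fin (d + 1) => θs (i : ℕ)) + ((θ 0 - θ 1) * astar0) • 1 := by
  obtain ⟨-, -, -, -, hb, hc, hsum, hfirst, -⟩ := h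
  ext i
  refine (triMat_toLin'_apply hb hc θs i).trans ?_
  simp only [Pi.add_apply, Pi.smul_apply, Pi.one_apply, smul_eq_mul]
  linear_combination hfirst i (by omega) + θs i * hsum i (by omega)

lemma isKrylovTriangular (h : Thm2Conds d θ θs a b c β γ γs astar0 Ω) :
    IsKrylovTriangular (triMat d a b c).toLin'
      (Matrix.diagonal fun i : Fin (d + 1) => θs (i : ℕ)).toLin' 1 (fun n => θ n) (d + 1) := by
  obtain ⟨ρ, ω, η, hAW⟩ := h.exists_askeyWilsonRel
  have hT : (Matrix.diagonal fun i : Fin (d + 1) => θs (i : ℕ)).toLin' 1 =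
      fun i : Fin (d + 1) => θs (i : ℕ) := by
    ext i
    simp [Matrix.mulVec_diagonal]
  refine hAW.toLin'.isKrylovTriangular (fun n hn => ?_) (by simpa using h.triMat_toLin'_one) ?_
  · obtain ⟨-, -, -, -, -, -, -, -, -, -, hθ⟩ := h
    have hrec := hθ (n + 1) (by omega) (by omega)
    rw [add_sub_cancel_right, add_assoc] at hrec
    exact_mod_cast hrec
  · rw [hT, h.triMat_toLin'_dualEigenvalue, Nat.cast_one, add_sub_cancel_left]
    exact Submodule.smul_mem _ _ (pow_apply_mem_krylov zero_lt_one)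

lemma krylov_eq_top (h : Thm2Conds d θ θs a b c β γ γs astar0 Ω) :
    krylov (Matrix.diagonal fun i : Fin (d + 1) => θs (i : ℕ)).toLin' 1 (d + 1) = ⊤ := by
  refine h.isIrredTridiag_triMat.eq_top_of_single_zero_mem
    (fun x hx => h.isKrylovTriangular.apply_mem le_rfl hx) (single_zero_mem_krylov fun i hi => ?_)
  have hi_pos : 0 < (i : ℕ) := Fin.pos_iff_ne_zero.2 hi
  exact h.2.1 (i : ℕ) (by omega) (by omega)

lemma exists_eigenbasis_isIrredTridiag (h : Thm2Conds d θ θs a b c β γ γs astar0 Ω) :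
    ∃ u : Module.Basis (Fin (d + 1)) F (Fin (d + 1) → F),
      (∀ i, (triMat d a b c).toLin' (u i) = θ (i : ℕ) • u i) ∧
      IsIrredTridiag (LinearMap.toMatrix u u
        (Matrix.diagonal fun i : Fin (d + 1) => θs (i : ℕ)).toLin') := by
  obtain ⟨k, hk, hsymm⟩ := h.isIrredTridiag_triMat.exists_symmetrizer
  refine h.isKrylovTriangular.exists_eigenbasis_isIrredTridiag (by simp) h.krylov_eq_top
    h.injOn_eigenvalue ?_ (isSelfAdjoint_toLinearMap₂'_diagonal hsymm)
    (isSelfAdjoint_toLinearMap₂'_diagonal fun i j => ?_)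
  · exact LinearMap.separatingLeft_toLinearMap₂'_of_det_ne_zero'
      (by simpa [Finset.prod_ne_zero_iff] using hk)
  · rcases eq_or_ne i j with rfl | hij
    · rfl
    · simp [hij, hij.symm]

end Thm2Conds

end Thm2Conds

section BasisIdempotent

/-- The rank one idempotent with image spanned by `u i` and kernel spanned by the other vectors of
the basis `u`; for an eigenbasis of `A` these are the primitive idempotents of `A`. -/
noncomputable def basisIdempotent {ι R M : Type*} [CommRing R] [AddCommGroup M] [Module R M]
    (u : Module.Basis ι R M) (i : ι) : Module.End R M :=
  (u.coord i).smulRight (u i)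

lemma basisIdempotent_mul_mul {ι R M : Type*} [Fintype ι] [DecidableEq ι] [CommRing R]
    [AddCommGroup M] [Module R M] (u : Module.Basis ι R M) (T : Module.End R M) (i j : ι) :
    basisIdempotent u i * T * basisIdempotent u j =
      LinearMap.toMatrix u u T i j • (u.coord j).smulRight (u i) := by
  ext x
  simp [basisIdempotent, LinearMap.toMatrix_apply, smul_smul, mul_comm]

lemma basisIdempotent_mul_mul_eq_zero_iff {ι R M : Type*} [Fintype ι] [DecidableEq ι] [CommRing R]
    [AddCommGroup M] [Module R M] (u : Module.Basis ι R M) (T : Module.End R M) (i j : ι) :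
    basisIdempotent u i * T * basisIdempotent u j = 0 ↔ LinearMap.toMatrix u u T i j = 0 := by
  rw [basisIdempotent_mul_mul]
  refine ⟨fun h => ?_, fun h => by rw [h, zero_smul]⟩
  simpa using congrArg (fun f => u.repr (f (u j)) i) h

variable {d : ℕ} {A As : Module.End F V} {u us : Module.Basis (Fin (d + 1)) F V}
  {θ θs : Fin (d + 1) → F}

lemma idempSysOf_basisIdempotent (hθ : Function.Injective θ) (hA : ∀ i, A (u i) = θ i • u i) :
    IdempSysOf d A θ (basisIdempotent u) := by
  refine ⟨⟨fun i j => ?_, fun i => ?_⟩, ?_, hθ, fun i => ?_⟩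
  · have hmul := basisIdempotent_mul_mul u 1 i j
    rw [mul_one, LinearMap.toMatrix_one, Matrix.one_apply] at hmul
    rw [hmul]
    split_ifs with hij
    · rw [hij, one_smul, basisIdempotent]
    · rw [zero_smul]
  · have hcoord : u.coord i ≠ 0 := fun h => by simpa using LinearMap.congr_fun h (u i)
    rw [basisIdempotent, LinearMap.range_smulRight_apply hcoord,
      finrank_span_singleton (u.ne_zero i)]
  · ext x
    simp [basisIdempotent]
  · ext x
    simp [basisIdempotent, hA, smul_smul, mul_comm]

lemma isLeonardPair_of_bases (hA : IsIrredTridiag (LinearMap.toMatrix us us A))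
    (hAs : IsIrredTridiag (LinearMap.toMatrix u u As)) (hu : ∀ i, A (u i) = θ i • u i)
    (hus : ∀ i, As (us i) = θs i • us i) : IsLeonardPair d A As :=
  ⟨⟨us, hA, isDiag_toMatrix_of_apply_basis_eq_smul hus⟩,
    ⟨u, hAs, isDiag_toMatrix_of_apply_basis_eq_smul hu⟩⟩

lemma isLeonardSystem_basisIdempotent (hA : IsIrredTridiag (LinearMap.toMatrix us us A))
    (hAs : IsIrredTridiag (LinearMap.toMatrix u u As))
    (hE : IdempSysOf d A θ (basisIdempotent u)) (hEs : IdempSysOf d As θs (basisIdempotent us)) :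
    IsLeonardSystem d A (basisIdempotent u) As (basisIdempotent us) := by
  refine ⟨⟨θ, hE⟩, ⟨θs, hEs⟩, ?_⟩
  simp only [Ne, basisIdempotent_mul_mul_eq_zero_iff]
  exact ⟨hA.1, hA.2, hAs.1, hAs.2⟩

end BasisIdempotent

/-- **Second main theorem** (Theorem 4.1 of the paper). Under conditions (i)–(viii),
the irreducible tridiagonal matrix `A = triMat d a b c` and the diagonal matrix
`As = diag(θs 0, …, θs d)` form a Leonard pair on `𝔽^{d+1}`; moreover `A` is
multiplicity-free with eigenvalues `θ 0, …, θ d`, `As` is multiplicity-free with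
eigenvalues `θs 0, …, θs d`, and `(A; E; As; Es)` is a Leonard system where `E i`
(resp. `Es i`) is the primitive idempotent of `A` (resp. `As`) for `θ i` (resp. `θs i`). -/
theorem second_main_theorem {F : Type*} [Field F]
    (d : ℕ) (hd : 1 ≤ d)
    (θ θs : ℤ → F) (a b c : ℕ → F) (β γ γs astar0 Ω : F)
    (h : Thm2Conds d θ θs a b c β γ γs astar0 Ω) :
    IsIrredTridiag (triMat d a b c) ∧
    IsLeonardPair d (Matrix.toLin' (triMat d a b c))
      (Matrix.toLin' (Matrix.diagonal fun i : Fin (d + 1) => θs ((i : ℕ) : ℤ))) ∧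
    ∃ E Es : Fin (d + 1) → Module.End F (Fin (d + 1) → F),
      IdempSysOf d (Matrix.toLin' (triMat d a b c)) (fun i : Fin (d + 1) => θ ((i : ℕ) : ℤ)) E ∧
      IdempSysOf d (Matrix.toLin' (Matrix.diagonal fun i : Fin (d + 1) => θs ((i : ℕ) : ℤ)))
        (fun i : Fin (d + 1) => θs ((i : ℕ) : ℤ)) Es ∧
      IsLeonardSystem d (Matrix.toLin' (triMat d a b c)) E
        (Matrix.toLin' (Matrix.diagonal fun i : Fin (d + 1) => θs ((i : ℕ) : ℤ))) Es := by
  obtain ⟨u, hu, hAs⟩ := h.exists_eigenbasis_isIrredTridiag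
  let us := Pi.basisFun F (Fin (d + 1))
  have hA : IsIrredTridiag (LinearMap.toMatrix us us (triMat d a b c).toLin') := by
    rw [← Matrix.toLin_eq_toLin', LinearMap.toMatrix_toLin]
    exact h.isIrredTridiag_triMat
  have hus (i : Fin (d + 1)) :
      (Matrix.diagonal fun i : Fin (d + 1) => θs (i : ℕ)).toLin' (us i) = θs (i : ℕ) • us i := by
    simp [us, ← Pi.single_smul]
  have hE := idempSysOf_basisIdempotent
    (fun i j hij => Fin.ext (h.injOn_eigenvalue i.2 j.2 hij)) hu
  have hEs := idempSysOf_basisIdempotent (injective_of_krylov_eq_top h.krylov_eq_top) hus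
  exact ⟨h.isIrredTridiag_triMat, isLeonardPair_of_bases hA hAs hu hus, basisIdempotent u,
    basisIdempotent us, hE, hEs, isLeonardSystem_basisIdempotent hA hAs hE hEs⟩

end LeonardPaper
end

section
/- Let 𝔽 be a field whose characteristic is zero or an odd prime greater than d, and let d ≥ 1 be an integer. Define θ_i = d − 2i and θ*_i = d − 2i for 0 ≤ i ≤ d, b_i = d − i for 0 ≤ i ≤ d−1, c_i = i for 1 ≤ i ≤ d, and a_i = 0 for 0 ≤ i ≤ d. Then conditions (i)–(viii) of the second main theorem are satisfied with β = 2, γ = 0, γ* = 0, θ_{−1} = d + 2, θ*_{−1} = d + 2, θ*_{d+1} = −d − 2, and a*_0 = 0; consequently the (d+1)×(d+1) irreducible tridiagonal matrix A over 𝔽 with zero diagonal, superdiagonal entries b_0,…,b_{d−1}, and subdiagonal entries c_1,…,c_d, together with A* = diag(θ*_0,…,θ*_d), form a Leonard pair on 𝔽^{d+1}, with A multiplicity-free with eigenvalues θ_0,…,θ_d. -/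
namespace LeonardPaper

variable {F : Type*} [Field F] {V : Type*} [AddCommGroup V] [Module F V]

/-!
The normalised Krawtchouk values `K i j = ₂F₁(-i, -j; -d; 2)` are symmetric in `i` and `j`, and
for fixed `j` they satisfy a three-term recurrence in `i` which says that the columns of the
matrix `K` are eigenvectors of the tridiagonal matrix `T`: `T * K = K * D`, where
`D = diag(d - 2i)`. Transposing this identity gives `D * K = K * Tᵀ`, so in the basis of columns
of `K` the map `T` becomes the diagonal `D`, while `D` becomes the irreducible tridiagonal `Tᵀ`.
The columns are independent since they belong to distinct eigenvalues.
-/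

section EigenBasis

variable {ι R M : Type*} [CommSemiring R] [AddCommMonoid M] [Module R M]

/-- The projection onto the line spanned by the `i`-th vector of a basis, along the remaining
basis vectors. For an eigenbasis of a multiplicity-free map these are the primitive idempotents. -/
noncomputable def basisProj (b : Module.Basis ι R M) (i : ι) : Module.End R M :=
  (b.coord i).smulRight (b i)

lemma basisProj_apply (b : Module.Basis ι R M) (i : ι) (x : M) :
    basisProj b i x = b.repr x i • b i := rfl

lemma basisProj_mul_basisProj [DecidableEq ι] (b : Module.Basis ι R M) (i j : ι) :
    basisProj b i * basisProj b j = if i = j then basisProj b i else 0 := by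
  ext x
  rw [Module.End.mul_apply, basisProj_apply b j, map_smul, basisProj_apply, b.repr_self,
    Finsupp.single_apply]
  rcases eq_or_ne i j with rfl | hij
  · simp [basisProj_apply]
  · simp [hij, hij.symm]

lemma sum_basisProj [Fintype ι] (b : Module.Basis ι R M) : ∑ i, basisProj b i = 1 := by
  ext x
  simp only [LinearMap.sum_apply, basisProj_apply, b.sum_repr, Module.End.one_apply]

lemma finrank_range_basisProj (b : Module.Basis ι F V) (i : ι) :
    Module.finrank F (LinearMap.range (basisProj b i)) = 1 := by
  have hcoord : b.coord i ≠ 0 := fun h => one_ne_zero (α := F) <| by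
    simpa using LinearMap.congr_fun h (b i)
  rw [basisProj, LinearMap.range_smulRight_apply hcoord, finrank_span_singleton (b.ne_zero i)]

lemma mul_basisProj_of_apply_eq_smul {A : Module.End R M} {b : Module.Basis ι R M} {i : ι} {μ : R}
    (h : A (b i) = μ • b i) : A * basisProj b i = μ • basisProj b i := by
  ext x
  rw [Module.End.mul_apply, basisProj_apply, map_smul, h, LinearMap.smul_apply, basisProj_apply,
    smul_comm]

theorem idempSysOf_basisProj {d : ℕ} {A : Module.End F V} {θ : Fin (d + 1) → F}
    {b : Module.Basis (Fin (d + 1)) F V} (hθ : Function.Injective θ)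
    (h : ∀ i, A (b i) = θ i • b i) : IdempSysOf d A θ (basisProj b) :=
  ⟨⟨basisProj_mul_basisProj b, finrank_range_basisProj b⟩, sum_basisProj b, hθ,
    fun i => mul_basisProj_of_apply_eq_smul (h i)⟩

end EigenBasis

section ColumnBasis

open Matrix

lemma exists_basis_eq_col {n : Type*} [Finite n] {P : Matrix n n F}
    (hP : LinearIndependent F P.col) : ∃ b : Module.Basis n F (n → F), ⇑b = P.col := by
  classical
  cases nonempty_fintype n
  exact ⟨basisOfPiSpaceOfLinearIndependent hP, coe_basisOfPiSpaceOfLinearIndependent hP⟩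

variable {m n R : Type*} [Fintype m] [Fintype n] [DecidableEq n] [CommSemiring R]

lemma toLin'_col_of_mul_eq_mul_diagonal [DecidableEq m] {T : Matrix m m R}
    {P : Matrix m n R} {θ : n → R} (h : T * P = P * diagonal θ) (j : n) :
    toLin' T (P.col j) = θ j • P.col j := by
  ext i
  calc (T *ᵥ P.col j) i = (T * P) i j := rfl
    _ = θ j * P i j := by rw [h, mul_diagonal, mul_comm]

lemma linearIndependent_col_of_mul_eq_mul_diagonal {T : Matrix m m F} {P : Matrix m n F}
    {θ : n → F} (h : T * P = P * diagonal θ) (hθ : Function.Injective θ)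
    (hP : ∀ j, P.col j ≠ 0) : LinearIndependent F P.col := by
  classical
  exact Module.End.eigenvectors_linearIndependent' (toLin' T) θ hθ P.col fun j =>
    ⟨Module.End.mem_eigenspace_iff.mpr (toLin'_col_of_mul_eq_mul_diagonal h j), hP j⟩

lemma toMatrix_toLin'_of_mul_eq_mul [DecidableEq m] {A : Matrix m m R}
    {P : Matrix m n R} {B : Matrix n n R} (b : Module.Basis n R (m → R))
    (hb : ⇑b = P.col) (h : A * P = P * B) : LinearMap.toMatrix b b (toLin' A) = B := by
  rw [← LinearMap.toMatrix_toLin b b B]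
  congr 1
  refine b.ext fun j => ?_
  ext i
  rw [toLin_self, hb]
  calc (A *ᵥ P.col j) i = (A * P) i j := rfl
    _ = (P * B) i j := by rw [h]
    _ = (∑ k, B k j • P.col k) i := by simp [mul_apply, Finset.sum_apply, mul_comm]

end ColumnBasis

section Tridiagonal

open Matrix

lemma IsIrredTridiag.transpose {n : ℕ} {T : Matrix (Fin n) (Fin n) F} (hT : IsIrredTridiag T) :
    IsIrredTridiag Tᵀ :=
  ⟨fun i j h => hT.1 j i h.symm, fun i j h => hT.2 j i h.symm⟩

theorem isLeonardPair_toLin' {d : ℕ} {T Ts P : Matrix (Fin (d + 1)) (Fin (d + 1)) F}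
    {θ θs : Fin (d + 1) → F} (hT : IsIrredTridiag T) (hTs : IsIrredTridiag Ts)
    (hP : LinearIndependent F P.col) (h : T * P = P * diagonal θ)
    (hs : diagonal θs * P = P * Ts) :
    IsLeonardPair d (toLin' T) (toLin' (diagonal θs)) := by
  obtain ⟨b, hb⟩ := exists_basis_eq_col hP
  refine ⟨⟨Pi.basisFun F _, ?_, ?_⟩, ⟨b, ?_, ?_⟩⟩
  · rwa [LinearMap.toMatrix_eq_toMatrix', LinearMap.toMatrix'_toLin']
  · rw [LinearMap.toMatrix_eq_toMatrix', LinearMap.toMatrix'_toLin']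
    exact isDiag_diagonal θs
  · rwa [toMatrix_toLin'_of_mul_eq_mul b hb hs]
  · rw [toMatrix_toLin'_of_mul_eq_mul b hb h]
    exact isDiag_diagonal θ

lemma isIrredTridiag_triMat {d : ℕ} (a : ℕ → F) {b c : ℕ → F} (hb : ∀ i < d, b i ≠ 0)
    (hc : ∀ i, 0 < i → i ≤ d → c i ≠ 0) : IsIrredTridiag (triMat d a b c) := by
  refine ⟨fun i j h => ?_, fun i j h => ?_⟩ <;> simp only [triMat, of_apply]
  · rw [if_neg (by omega), if_neg (by omega), if_neg (by omega)]
  · rcases h with h | h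
    · rw [if_neg (by omega), if_pos h]
      exact hb i (by omega)
    · rw [if_neg (by omega), if_neg (by omega), if_pos h]
      exact hc i (by omega) (by omega)

-- The truncated index `i - 1` at `i = 0` is harmless, as it is multiplied by `c 0 = 0`.
lemma triMat_mulVec {d : ℕ} {b c : ℕ → F} (a : ℕ → F) (hb : b d = 0) (hc : c 0 = 0) (f : ℕ → F)
    (i : Fin (d + 1)) :
    (triMat d a b c *ᵥ fun l => f l) i = c i * f (i - 1) + a i * f i + b i * f (i + 1) := by
  obtain ⟨i, hi⟩ := i
  have hsplit (l : Fin (d + 1)) : triMat d a b c ⟨i, hi⟩ l * f l =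
      (if l + 1 = i then c i * f l else 0) + (if i = l then a i * f l else 0) +
        (if i + 1 = l then b i * f l else 0) := by
    simp only [triMat, of_apply]
    split_ifs <;> first | omega | simp
  have hsub : ∑ l ∈ Finset.range (d + 1), (if l + 1 = i then c i * f l else 0) =
      c i * f (i - 1) := by
    rcases i with _ | i
    · simp [hc]
    · simp only [Nat.add_right_cancel_iff, Nat.add_sub_cancel]
      rw [Finset.sum_ite_eq', if_pos (Finset.mem_range.mpr (by omega))]
  have hsuper : ∑ l ∈ Finset.range (d + 1), (if i + 1 = l then b i * f l else 0) =
      b i * f (i + 1) := by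
    rw [Finset.sum_ite_eq]
    split_ifs with h
    · rfl
    · rw [show i = d by simp only [Finset.mem_range] at h; omega, hb, zero_mul]
  rw [mulVec, dotProduct, Finset.sum_congr rfl fun l _ => hsplit l,
    Fin.sum_univ_eq_sum_range (fun l : ℕ => (if l + 1 = i then c i * f l else 0) +
      (if i = l then a i * f l else 0) + (if i + 1 = l then b i * f l else 0)) (d + 1),
    Finset.sum_add_distrib, Finset.sum_add_distrib, hsub, hsuper, Finset.sum_ite_eq,
    if_pos (Finset.mem_range.mpr hi)]

end Tridiagonal

section Binomial

variable {R : Type*} [CommRing R]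

lemma succ_mul_cast_choose_succ (n k : ℕ) :
    ((k : R) + 1) * (n.choose (k + 1) : R) = ((n : R) - k) * (n.choose k : R) := by
  rcases le_or_gt k n with hk | hk
  · have h := congrArg (Nat.cast : ℕ → R) (Nat.choose_succ_right_eq n k)
    push_cast [Nat.cast_sub hk] at h
    linear_combination h
  · simp [Nat.choose_eq_zero_of_lt hk, Nat.choose_eq_zero_of_lt (hk.trans k.lt_succ_self)]

lemma mul_cast_choose_pred (n k : ℕ) :
    (n : R) * ((n - 1).choose k : R) = ((n : R) - k) * (n.choose k : R) := by
  rcases n with _ | n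
  · rcases k with _ | k <;> simp
  · have h := congrArg (Nat.cast : ℕ → R) (Nat.add_one_mul_choose_eq n k)
    push_cast at h
    rw [← succ_mul_cast_choose_succ, Nat.add_sub_cancel]
    push_cast
    linear_combination h

end Binomial

section Factorial

variable {R : Type*} [Ring R] {d : ℕ}

lemma natCast_ne_zero_of_dvd {m n : ℕ} (hmn : m ∣ n) (hn : (n : R) ≠ 0) : (m : R) ≠ 0 :=
  fun hm => hn (zero_dvd_iff.mp (hm ▸ Nat.cast_dvd_cast hmn))

lemma natCast_ne_zero_of_factorial_ne_zero (hd : (d.factorial : R) ≠ 0) {n : ℕ} (hn : 0 < n)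
    (hnd : n ≤ d) : (n : R) ≠ 0 :=
  natCast_ne_zero_of_dvd (Nat.dvd_factorial hn hnd) hd

lemma natCast_choose_ne_zero_of_factorial_ne_zero (hd : (d.factorial : R) ≠ 0) {k : ℕ}
    (hk : k ≤ d) : (d.choose k : R) ≠ 0 := by
  refine natCast_ne_zero_of_dvd ?_ hd
  rw [← Nat.choose_mul_factorial_mul_factorial hk, mul_assoc]
  exact dvd_mul_right _ _

lemma natCast_sub_ne_zero_of_factorial_ne_zero (hd : (d.factorial : R) ≠ 0) {m n : ℕ}
    (hmn : m < n) (hn : n ≤ d) : (n : R) - m ≠ 0 := by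
  rw [← Nat.cast_sub hmn.le]
  exact natCast_ne_zero_of_factorial_ne_zero hd (Nat.sub_pos_of_lt hmn) ((n.sub_le m).trans hn)

lemma natCast_injOn_of_factorial_ne_zero (hd : (d.factorial : R) ≠ 0) :
    Set.InjOn (Nat.cast : ℕ → R) (Set.Iic d) := by
  intro m hm n hn h
  rcases lt_trichotomy m n with hmn | hmn | hmn
  · exact absurd (sub_eq_zero.mpr h.symm) (natCast_sub_ne_zero_of_factorial_ne_zero hd hmn hn)
  · exact hmn
  · exact absurd (sub_eq_zero.mpr h) (natCast_sub_ne_zero_of_factorial_ne_zero hd hmn hm)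

lemma factorial_ne_zero_of_ringChar
    (h : ringChar R = 0 ∨ ((ringChar R).Prime ∧ d < ringChar R)) : (d.factorial : R) ≠ 0 := by
  rw [Ne, ringChar.spec]
  rcases h with h | ⟨hp, hlt⟩
  · rw [h, zero_dvd_iff]
    exact d.factorial_ne_zero
  · rw [hp.dvd_factorial]
    exact hlt.not_ge

end Factorial

section Krawtchouk

open Matrix

variable (F) in
/-- The coefficient `(-2)^k / (d choose k)` of the Krawtchouk polynomials, meaningful for `k ≤ d`
when `d!` is nonzero in `F`. -/
def krawtchoukCoeff (d k : ℕ) : F := (-2) ^ k / (d.choose k : F)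

variable (F) in
/-- The value at `j` of the `i`-th Krawtchouk polynomial, normalised so that it is symmetric in
`i` and `j`: the hypergeometric sum `₂F₁(-i, -j; -d; 2)`. -/
def krawtchouk (d i j : ℕ) : F :=
  ∑ k ∈ Finset.range (d + 1), krawtchoukCoeff F d k * (i.choose k : F) * (j.choose k : F)

variable (F) in
/-- The eigenvalue `θ_i = θ*_i = d - 2i`, indexed by `ℤ` to allow the indices `-1` and `d + 1`. -/
def krawtchoukEigenvalue (d : ℕ) (i : ℤ) : F := (d : F) - 2 * (i : F)

variable (F) in
/-- The tridiagonal matrix of Krawtchouk type, with zero diagonal, superdiagonal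
`d, d - 1, …, 1` and subdiagonal `1, 2, …, d`. -/
def krawtchoukTriMat (d : ℕ) : Matrix (Fin (d + 1)) (Fin (d + 1)) F :=
  triMat d (fun _ => 0) (fun i => (d : F) - (i : F)) (fun i => (i : F))

variable (F) in
/-- The diagonal matrix of Krawtchouk type, with entries `d, d - 2, …, -d`. -/
def krawtchoukDiag (d : ℕ) : Matrix (Fin (d + 1)) (Fin (d + 1)) F :=
  diagonal fun i => krawtchoukEigenvalue F d ((i : ℕ) : ℤ)

variable (F) in
/-- The matrix of normalised Krawtchouk values; its columns are an eigenbasis of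
`krawtchoukTriMat`. -/
def krawtchoukMatrix (d : ℕ) : Matrix (Fin (d + 1)) (Fin (d + 1)) F :=
  of fun i j => krawtchouk F d i j

variable {d : ℕ}

lemma krawtchouk_comm (i j : ℕ) : krawtchouk F d i j = krawtchouk F d j i :=
  Finset.sum_congr rfl fun _ _ => mul_right_comm _ _ _

lemma krawtchouk_zero_left (j : ℕ) : krawtchouk F d 0 j = 1 := by
  rw [krawtchouk, Finset.sum_range_succ']
  simp [krawtchoukCoeff]

lemma krawtchoukCoeff_succ (hd : (d.factorial : F) ≠ 0) {k : ℕ} (hk : k < d) :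
    krawtchoukCoeff F d (k + 1) * ((d : F) - k) = -2 * ((k : F) + 1) * krawtchoukCoeff F d k := by
  have hchoose := natCast_choose_ne_zero_of_factorial_ne_zero hd hk.le
  have hchoose_succ := natCast_choose_ne_zero_of_factorial_ne_zero hd (Nat.succ_le_of_lt hk)
  rw [krawtchoukCoeff, krawtchoukCoeff]
  field_simp
  linear_combination 2 * (-2) ^ k * succ_mul_cast_choose_succ (R := F) d k

variable (F d) in
/-- The binomial part of the `k`-th summand of the three-term recurrence for `krawtchouk`. -/
def recurrenceTerm (i j k : ℕ) : F :=
  (i : F) * ((i - 1).choose k : F) + ((d : F) - i) * ((i + 1).choose k : F)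
    - ((d : F) - 2 * j) * (i.choose k : F)

lemma recurrenceTerm_zero (i j : ℕ) : recurrenceTerm F d i j 0 = 2 * j := by
  simp only [recurrenceTerm, Nat.choose_zero_right, Nat.cast_one]
  ring

lemma recurrenceTerm_succ (i j k : ℕ) :
    recurrenceTerm F d i j (k + 1) =
      2 * ((j : F) - (k + 1)) * (i.choose (k + 1) : F) + ((d : F) - k) * (i.choose k : F) := by
  have hpred := mul_cast_choose_pred (R := F) i (k + 1)
  have hsucc := succ_mul_cast_choose_succ (R := F) i k
  rw [recurrenceTerm, Nat.choose_succ_succ]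
  push_cast at hpred ⊢
  linear_combination hpred + hsucc

-- The three-term recurrence telescopes: for `j ≤ d` the full sum, at `n = d`, vanishes because of
-- the factor `(j - d) * (j choose d)`.
lemma sum_range_recurrenceTerm (hd : (d.factorial : F) ≠ 0) (i j : ℕ) {n : ℕ} (hn : n ≤ d) :
    ∑ k ∈ Finset.range (n + 1),
        krawtchoukCoeff F d k * (j.choose k : F) * recurrenceTerm F d i j k =
      2 * ((j : F) - n) * krawtchoukCoeff F d n * (i.choose n : F) * (j.choose n : F) := by
  induction n with
  | zero =>
    rw [Finset.sum_range_one, recurrenceTerm_zero, Nat.choose_zero_right, Nat.choose_zero_right]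
    push_cast
    ring
  | succ n ih =>
    rw [Finset.sum_range_succ, ih (by omega), recurrenceTerm_succ]
    have hcoeff := krawtchoukCoeff_succ hd (Nat.lt_of_succ_le hn)
    have hchoose := succ_mul_cast_choose_succ (R := F) j n
    push_cast
    linear_combination (i.choose n : F) * (j.choose (n + 1) : F) * hcoeff
      - 2 * krawtchoukCoeff F d n * (i.choose n : F) * hchoose

theorem krawtchouk_recurrence (hd : (d.factorial : F) ≠ 0) (i : ℕ) {j : ℕ} (hj : j ≤ d) :
    (i : F) * krawtchouk F d (i - 1) j + ((d : F) - i) * krawtchouk F d (i + 1) j =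
      ((d : F) - 2 * j) * krawtchouk F d i j := by
  have hvanish : ((j : F) - d) * (j.choose d : F) = 0 := by
    rcases hj.eq_or_lt with rfl | hlt
    · simp
    · simp [Nat.choose_eq_zero_of_lt hlt]
  rw [← sub_eq_zero]
  calc _ = ∑ k ∈ Finset.range (d + 1),
        krawtchoukCoeff F d k * (j.choose k : F) * recurrenceTerm F d i j k := by
        simp only [krawtchouk, Finset.mul_sum, ← Finset.sum_add_distrib, ← Finset.sum_sub_distrib]
        exact Finset.sum_congr rfl fun k _ => by rw [recurrenceTerm]; ring
    _ = 2 * ((j : F) - d) * krawtchoukCoeff F d d * (i.choose d : F) * (j.choose d : F) :=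
        sum_range_recurrenceTerm hd i j le_rfl
    _ = 0 := by linear_combination 2 * krawtchoukCoeff F d d * (i.choose d : F) * hvanish

lemma krawtchoukEigenvalue_ne (h2 : (2 : F) ≠ 0) (hd : (d.factorial : F) ≠ 0) {i j : ℤ}
    (hi : 0 ≤ i) (hid : i ≤ d) (hj : 0 ≤ j) (hjd : j ≤ d) (hij : i ≠ j) :
    krawtchoukEigenvalue F d i ≠ krawtchoukEigenvalue F d j := by
  lift i to ℕ using hi
  lift j to ℕ using hj
  intro h
  have hcast : (i : F) = j := mul_left_cancel₀ h2 (by simpa [krawtchoukEigenvalue] using h)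
  exact hij (congrArg Nat.cast (natCast_injOn_of_factorial_ne_zero hd
    (Set.mem_Iic.mpr (by omega)) (Set.mem_Iic.mpr (by omega)) hcast))

lemma krawtchoukEigenvalue_injective (h2 : (2 : F) ≠ 0) (hd : (d.factorial : F) ≠ 0) :
    Function.Injective fun i : Fin (d + 1) => krawtchoukEigenvalue F d ((i : ℕ) : ℤ) := by
  intro i j h
  by_contra hij
  exact krawtchoukEigenvalue_ne h2 hd (by omega) (by omega) (by omega) (by omega) (by omega) h

lemma isIrredTridiag_krawtchoukTriMat (hd : (d.factorial : F) ≠ 0) :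
    IsIrredTridiag (krawtchoukTriMat F d) :=
  isIrredTridiag_triMat _
    (fun _ hi => natCast_sub_ne_zero_of_factorial_ne_zero hd hi le_rfl)
    (fun _ hi hid => natCast_ne_zero_of_factorial_ne_zero hd hi hid)

lemma krawtchoukMatrix_transpose : (krawtchoukMatrix F d)ᵀ = krawtchoukMatrix F d := by
  ext i j
  exact krawtchouk_comm _ _

lemma krawtchoukMatrix_col_ne_zero (j : Fin (d + 1)) : (krawtchoukMatrix F d).col j ≠ 0 := by
  intro h
  have hentry : krawtchouk F d 0 j = 0 := congrFun h 0
  exact one_ne_zero ((krawtchouk_zero_left _).symm.trans hentry)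

theorem krawtchoukTriMat_mul_krawtchoukMatrix (hd : (d.factorial : F) ≠ 0) :
    krawtchoukTriMat F d * krawtchoukMatrix F d = krawtchoukMatrix F d * krawtchoukDiag F d := by
  ext i j
  have hrec := krawtchouk_recurrence hd i (Nat.le_of_lt_succ j.isLt)
  calc (krawtchoukTriMat F d * krawtchoukMatrix F d) i j
      = (krawtchoukTriMat F d *ᵥ fun l => krawtchouk F d l j) i := rfl
    _ = ((d : F) - 2 * (j : ℕ)) * krawtchouk F d i j := by
      rw [krawtchoukTriMat, triMat_mulVec _ (sub_self _) Nat.cast_zero (krawtchouk F d · j),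
        zero_mul, add_zero, hrec]
    _ = (krawtchoukMatrix F d * krawtchoukDiag F d) i j := by
      simp [krawtchoukDiag, krawtchoukMatrix, krawtchoukEigenvalue, mul_comm]

lemma krawtchoukDiag_mul_krawtchoukMatrix (hd : (d.factorial : F) ≠ 0) :
    krawtchoukDiag F d * krawtchoukMatrix F d =
      krawtchoukMatrix F d * (krawtchoukTriMat F d)ᵀ := by
  have h := congrArg transpose (krawtchoukTriMat_mul_krawtchoukMatrix hd)
  rw [transpose_mul, transpose_mul, krawtchoukMatrix_transpose] at h
  rw [h, krawtchoukDiag, diagonal_transpose]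

lemma linearIndependent_krawtchoukMatrix_col (h2 : (2 : F) ≠ 0) (hd : (d.factorial : F) ≠ 0) :
    LinearIndependent F (krawtchoukMatrix F d).col :=
  linearIndependent_col_of_mul_eq_mul_diagonal (krawtchoukTriMat_mul_krawtchoukMatrix hd)
    (krawtchoukEigenvalue_injective h2 hd) krawtchoukMatrix_col_ne_zero

theorem isLeonardPair_krawtchouk (h2 : (2 : F) ≠ 0) (hd : (d.factorial : F) ≠ 0) :
    IsLeonardPair d (toLin' (krawtchoukTriMat F d)) (toLin' (krawtchoukDiag F d)) :=
  isLeonardPair_toLin' (isIrredTridiag_krawtchoukTriMat hd)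
    (isIrredTridiag_krawtchoukTriMat hd).transpose (linearIndependent_krawtchoukMatrix_col h2 hd)
    (krawtchoukTriMat_mul_krawtchoukMatrix hd) (krawtchoukDiag_mul_krawtchoukMatrix hd)

theorem exists_idempSysOf_krawtchoukTriMat (h2 : (2 : F) ≠ 0) (hd : (d.factorial : F) ≠ 0) :
    ∃ E, IdempSysOf d (toLin' (krawtchoukTriMat F d))
      (fun i => krawtchoukEigenvalue F d ((i : ℕ) : ℤ)) E := by
  obtain ⟨b, hb⟩ := exists_basis_eq_col (linearIndependent_krawtchoukMatrix_col h2 hd)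
  refine ⟨basisProj b,
    idempSysOf_basisProj (krawtchoukEigenvalue_injective h2 hd) fun j => ?_⟩
  rw [hb]
  exact toLin'_col_of_mul_eq_mul_diagonal (krawtchoukTriMat_mul_krawtchoukMatrix hd) j

lemma krawtchoukEigenvalue_second_difference (i : ℤ) :
    krawtchoukEigenvalue F d (i - 1) - 2 * krawtchoukEigenvalue F d i +
      krawtchoukEigenvalue F d (i + 1) = 0 := by
  simp only [krawtchoukEigenvalue]
  push_cast
  ring

theorem thm2Conds_krawtchouk (h2 : (2 : F) ≠ 0) (hd : (d.factorial : F) ≠ 0) :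
    Thm2Conds d (krawtchoukEigenvalue F d) (krawtchoukEigenvalue F d) (fun _ => 0)
      (fun i => (d : F) - (i : F)) (fun i => (i : F)) 2 0 0 0 0 := by
  refine ⟨fun _ _ => krawtchoukEigenvalue_ne h2 hd,
    fun i hi hid => krawtchoukEigenvalue_ne h2 hd (by omega) hid le_rfl (by omega) (by omega),
    fun i _ _ => (krawtchoukEigenvalue_second_difference i).symm,
    fun i hi hid => mul_ne_zero (natCast_sub_ne_zero_of_factorial_ne_zero hd (by omega) le_rfl)
      (natCast_ne_zero_of_factorial_ne_zero hd hi hid),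
    sub_self _, Nat.cast_zero, fun i _ => ?_, fun i _ => ?_, fun i hi _ => ?_,
    (krawtchoukEigenvalue_second_difference 0).symm,
    fun i _ _ => krawtchoukEigenvalue_second_difference i⟩
  · simp [krawtchoukEigenvalue]
  · simp only [krawtchoukEigenvalue]
    push_cast
    ring
  · simp only [krawtchoukEigenvalue]
    push_cast [Nat.cast_sub hi]
    ring

end Krawtchouk

/-- Proposition 5.1 of the paper (Krawtchouk type). With `θ i = θs i = d − 2i`,
`b i = d − i`, `c i = i`, `a i = 0`, the conditions of the second main theorem hold
with `β = 2`, `γ = γ* = 0`, `θ_{-1} = θ*_{-1} = d + 2`, `θ*_{d+1} = −d − 2`, `a*_0 = 0`;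
consequently the corresponding tridiagonal/diagonal pair is a Leonard pair on `𝔽^{d+1}`,
with the tridiagonal member multiplicity-free with eigenvalues `θ 0, …, θ d`. -/
theorem krawtchouk_type {F : Type*} [Field F] (d : ℕ) (hd : 1 ≤ d)
    (hchar : ringChar F = 0 ∨ ((ringChar F).Prime ∧ Odd (ringChar F) ∧ d < ringChar F)) :
    let θ : ℤ → F := fun i => (d : F) - 2 * (i : F)
    let θs : ℤ → F := fun i => (d : F) - 2 * (i : F)
    let aseq : ℕ → F := fun _ => 0
    let bseq : ℕ → F := fun i => (d : F) - (i : F)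
    let cseq : ℕ → F := fun i => (i : F)
    (∃ Ω : F, Thm2Conds d θ θs aseq bseq cseq 2 0 0 0 Ω) ∧
    θ (-1) = (d : F) + 2 ∧ θs (-1) = (d : F) + 2 ∧ θs ((d : ℤ) + 1) = -(d : F) - 2 ∧
    IsIrredTridiag (triMat d aseq bseq cseq) ∧
    IsLeonardPair d (Matrix.toLin' (triMat d aseq bseq cseq))
      (Matrix.toLin' (Matrix.diagonal fun i : Fin (d + 1) => θs ((i : ℕ) : ℤ))) ∧
    ∃ E : Fin (d + 1) → Module.End F (Fin (d + 1) → F),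
      IdempSysOf d (Matrix.toLin' (triMat d aseq bseq cseq))
        (fun i : Fin (d + 1) => θ ((i : ℕ) : ℤ)) E := by
  have hfact : (d.factorial : F) ≠ 0 :=
    factorial_ne_zero_of_ringChar (hchar.imp_right fun h => ⟨h.1, h.2.2⟩)
  have htwo : (2 : F) ≠ 0 := Ring.two_ne_zero fun hchar_two => by
    rcases hchar with h | ⟨-, hodd, -⟩
    · omega
    · exact absurd (hchar_two ▸ hodd) (by decide)
  exact ⟨⟨0, thm2Conds_krawtchouk htwo hfact⟩, by simp, by simp, by push_cast; ring,
    isIrredTridiag_krawtchoukTriMat hfact, isLeonardPair_krawtchouk htwo hfact,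
    exists_idempSysOf_krawtchoukTriMat htwo hfact⟩

end LeonardPaper
end
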